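/- (Asymptotic convergence of UDD-ALM with nonlinear constraints, Theorem 4.7 part 1.) Let x* ∈ X be a limit point of {x^k} (i.e., x^{k_r} → x* along a strictly increasing subsequence) such that the matrix H* = [∇h_1(x*),…,∇h_m(x*), (∇q_l(x*))_{l∈I(x*)}], where I(x*) = {l : q_l(x*) = 0}, has linearly independent columns. Then x* is a KKT point of min{f(x) + g_0(x) : h(x) = 0, x ∈ X}: h(x*) = 0, and there exist μ* ∈ ℝ^m, y* ∈ ℝ^L with y* ≥ 0 componentwise, and a subgradient ζ* of g_0 at x*, such that 0 = ∇f(x*) + ζ* + ∇h(x*)μ* + Σ_{l=1}^L y*_l ∇q_l(x*), q_l(x*) ≤ 0 for all l, and y*_l q_l(x*) = 0 for all l. -/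

import Mathlib

open scoped RealInnerProductSpace BigOperators

noncomputable section

/-- The augmented Lagrangian `L_ρ(x,μ) = f(x) + g₀(x) + ⟨μ, h(x)⟩ + (ρ/2)‖h(x)‖²`. -/
def LrhoNL {nn mm : ℕ} (f g0 : EuclideanSpace ℝ (Fin nn) → ℝ)
    (h : EuclideanSpace ℝ (Fin nn) → EuclideanSpace ℝ (Fin mm)) (ρ : ℝ)
    (x : EuclideanSpace ℝ (Fin nn)) (μ : EuclideanSpace ℝ (Fin mm)) : ℝ :=
  f x + g0 x + ⟪μ, h x⟫ + ρ / 2 * ‖h x‖ ^ 2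

/-!
The augmented Lagrangian `P k = L_ρ(x k, μ k)` is a Lyapunov function: the primal step lowers it by
at least `ν ‖x (k+1) - x k‖²`, and the dual *descent* step lowers it by exactly `ϱ ‖h (x (k+1))‖²`.
The only obstruction to convergence is that `P` might tend to `-∞`, through unbounded multipliers.

Along the convergent subsequence this cannot happen. Near `xstar` only constraints active at
`xstar` carry a nonzero multiplier, so stationarity reads `T (x (k+1)) w = z`, where `w` collects
`μ k + ρ h (x (k+1))` and the active `y (k+1)`, where `z` is bounded (the iterates and the
subgradients are, by compactness), and where `T` depends continuously on the point. Linear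
independence makes `T xstar` injective, hence bounded below uniformly near `xstar`, so `w` is
bounded (`eventually_bounded_of_injective_limit`). Thus `P` is bounded below along a subsequence,
and being antitone it is bounded below. Consequently `h (x (k+1)) → 0` and `x (k+1) - x k → 0`, and
the KKT system follows by passing to the limit along a further subsequence on which `w` and the
subgradients converge.
-/

open Filter Topology

/-- If operators on a finite-dimensional space converge in norm to an injective one, they are
eventually uniformly bounded below, so preimages of bounded vectors are bounded. -/
lemma eventually_bounded_of_injective_limit {V W : Type*} [NormedAddCommGroup V] [NormedSpace ℝ V]
    [FiniteDimensional ℝ V] [NormedAddCommGroup W] [NormedSpace ℝ W]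
    {T : ℕ → V →L[ℝ] W} {T₀ : V →L[ℝ] W} (hT : Tendsto T atTop (𝓝 T₀))
    (hinj : Function.Injective T₀) {w : ℕ → V} {C : ℝ}
    (hw : ∀ᶠ r in atTop, ‖T r (w r)‖ ≤ C) : ∃ D, ∀ᶠ r in atTop, ‖w r‖ ≤ D := by
  obtain ⟨K, hK, hanti⟩ := (T₀ : V →ₗ[ℝ] W).exists_antilipschitzWith
    (LinearMap.ker_eq_bot.2 hinj)
  have hKpos : (0 : ℝ) < K := hK
  have hlow : ∀ v, ‖v‖ ≤ K * ‖T₀ v‖ := fun v => by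
    simpa using hanti.le_mul_dist v 0
  have hclose : ∀ᶠ r in atTop, ‖T r - T₀‖ < 1 / (2 * K) := by
    have := (tendsto_iff_norm_sub_tendsto_zero.1 hT)
    exact this.eventually (gt_mem_nhds (by positivity))
  refine ⟨2 * K * C, ?_⟩
  filter_upwards [hw, hclose] with r hr hc
  have h1 : ‖T₀ (w r)‖ ≤ ‖T r (w r)‖ + ‖(T r - T₀) (w r)‖ := by
    have : T₀ (w r) = T r (w r) - (T r - T₀) (w r) := by simp
    rw [this]; exact norm_sub_le _ _
  have h2 : ‖(T r - T₀) (w r)‖ ≤ 1 / (2 * K) * ‖w r‖ :=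
    ((T r - T₀).le_opNorm _).trans (by gcongr)
  have h3 : (K : ℝ) * ‖T₀ (w r)‖ ≤ K * (C + 1 / (2 * K) * ‖w r‖) := by gcongr; linarith
  have h4 : (K : ℝ) * (C + 1 / (2 * K) * ‖w r‖) = K * C + ‖w r‖ / 2 := by field_simp
  linarith [hlow (w r)]

/-- Subgradients of a continuous function at points of a compact set are uniformly bounded: test
the subgradient inequality at unit distance in the direction of the subgradient. -/
lemma exists_subgradient_bound {E : Type*} [NormedAddCommGroup E] [InnerProductSpace ℝ E]
    [ProperSpace E] {g : E → ℝ} (hg : Continuous g) {X : Set E} (hX : IsCompact X) :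
    ∃ M, ∀ p ∈ X, ∀ z : E, (∀ u, g u ≥ g p + ⟪z, u - p⟫) → ‖z‖ ≤ M := by
  obtain ⟨M, hM⟩ := (hX.prod (isCompact_closedBall (0 : E) 1)).exists_bound_of_continuousOn
    (f := fun pv : E × E => g (pv.1 + pv.2) - g pv.1) (by fun_prop)
  refine ⟨M, fun p hp z hz => ?_⟩
  have hmem : ‖z‖⁻¹ • z ∈ Metric.closedBall (0 : E) 1 := by
    rw [mem_closedBall_zero_iff, norm_smul, norm_inv, norm_norm]
    exact inv_mul_le_one
  have h1 := hM (p, ‖z‖⁻¹ • z) ⟨hp, hmem⟩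
  have h2 := hz (p + ‖z‖⁻¹ • z)
  have h3 : ⟪z, p + ‖z‖⁻¹ • z - p⟫ = ‖z‖ := by
    rw [add_sub_cancel_left, real_inner_smul_right, real_inner_self_eq_norm_sq]
    rcases eq_or_ne ‖z‖ 0 with h0 | h0
    · simp [h0]
    · field_simp
  rw [h3] at h2
  have := (le_abs_self _).trans h1
  dsimp only at this
  linarith

lemma tendsto_clm_apply {V W : Type*} [NormedAddCommGroup V] [NormedSpace ℝ V]
    [NormedAddCommGroup W] [NormedSpace ℝ W] {T : ℕ → V →L[ℝ] W} {T₀ : V →L[ℝ] W}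
    (hT : Tendsto T atTop (𝓝 T₀)) {w : ℕ → V} {w₀ : V} (hw : Tendsto w atTop (𝓝 w₀)) :
    Tendsto (fun r => T r (w r)) atTop (𝓝 (T₀ w₀)) :=
  (isBoundedBilinearMap_apply.continuous.tendsto (T₀, w₀)).comp (hT.prodMk_nhds hw)

lemma continuous_gradient_of_contDiff {E : Type*} [NormedAddCommGroup E] [InnerProductSpace ℝ E]
    [CompleteSpace E] {g : E → ℝ} (hg : ContDiff ℝ 1 g) : Continuous (gradient g) := by
  unfold gradient
  exact (InnerProductSpace.toDual ℝ E).symm.continuous.comp (hg.continuous_fderiv (by norm_num))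

/-- The linear map `(a, b) ↦ ∇h(p) a + ∑ l ∈ A, b_l ∇q_l(p)`, whose matrix has the gradients of the
equality constraints and of the constraints `q_l`, `l ∈ A`, as columns. -/
def constraintMap {nn mm L : ℕ} (q : Fin L → EuclideanSpace ℝ (Fin nn) → ℝ)
    (h : EuclideanSpace ℝ (Fin nn) → EuclideanSpace ℝ (Fin mm)) (A : Fin L → Prop)
    [DecidablePred A] (p : EuclideanSpace ℝ (Fin nn)) :
    (EuclideanSpace ℝ (Fin mm) × ({l // A l} → ℝ)) →L[ℝ] EuclideanSpace ℝ (Fin nn) :=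
  (ContinuousLinearMap.adjoint (fderiv ℝ h p)).comp (ContinuousLinearMap.fst ℝ _ _)
    + ∑ l : {l // A l}, ((ContinuousLinearMap.proj (R := ℝ) (φ := fun _ : {l // A l} => ℝ) l).comp
        (ContinuousLinearMap.snd ℝ _ _)).smulRight (gradient (q l) p)

section constraintMap

variable {nn mm L : ℕ} {q : Fin L → EuclideanSpace ℝ (Fin nn) → ℝ}
  {h : EuclideanSpace ℝ (Fin nn) → EuclideanSpace ℝ (Fin mm)} {A : Fin L → Prop}
  [DecidablePred A]

lemma constraintMap_apply (p : EuclideanSpace ℝ (Fin nn))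
    (w : EuclideanSpace ℝ (Fin mm) × ({l // A l} → ℝ)) :
    constraintMap q h A p w = ContinuousLinearMap.adjoint (fderiv ℝ h p) w.1
      + ∑ l : {l // A l}, w.2 l • gradient (q l) p := by
  simp [constraintMap]

lemma continuous_constraintMap (hq : ∀ l, ContDiff ℝ 1 (q l)) (hh : ContDiff ℝ 1 h) :
    Continuous (constraintMap q h A) := by
  unfold constraintMap
  refine Continuous.add ?_ (continuous_finsetSum _ fun l _ => ?_)
  · exact ((ContinuousLinearMap.adjoint.continuous).comp
      (hh.continuous_fderiv (by norm_num))).clm_comp continuous_const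
  · exact ((ContinuousLinearMap.smulRightL ℝ _ _) _).continuous.comp
      (continuous_gradient_of_contDiff (hq l))

lemma constraintMap_injective {p : EuclideanSpace ℝ (Fin nn)}
    (hli : LinearIndependent ℝ (Sum.elim
      (fun j : Fin mm =>
        (ContinuousLinearMap.adjoint (fderiv ℝ h p)) (EuclideanSpace.single j 1))
      (fun l : {l : Fin L // A l} => gradient (q (l : Fin L)) p))) :
    Function.Injective (constraintMap q h A p) := by
  refine (injective_iff_map_eq_zero _).2 fun w hw => ?_
  have hsum : w.1 = ∑ j, w.1 j • EuclideanSpace.single j (1 : ℝ) := by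
    simpa using ((EuclideanSpace.basisFun (Fin mm) ℝ).sum_repr w.1).symm
  rw [constraintMap_apply, hsum, map_sum] at hw
  have h0 := Fintype.linearIndependent_iff.1 hli (Sum.elim w.1 w.2) (by
    simpa [Fintype.sum_sum_type] using hw)
  ext i
  · simpa using h0 (Sum.inl i)
  · simpa using h0 (Sum.inr i)

/-- If `b` vanishes off `A`, the full sum of multipliers reduces to the constraints in `A`. -/
lemma sum_eq_sum_subtype {b : Fin L → ℝ} (hb : ∀ l, ¬ A l → b l = 0)
    (v : Fin L → EuclideanSpace ℝ (Fin nn)) :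
    ∑ l, b l • v l = ∑ l : {l // A l}, b l • v l := by
  rw [← Fintype.sum_subtype_add_sum_subtype A]
  simp only [add_eq_left]
  exact Finset.sum_eq_zero fun l _ => by rw [hb l l.2, zero_smul]

end constraintMap

/-- The dual descent step lowers the augmented Lagrangian by exactly `ϱ ‖h x‖²`. -/
lemma LrhoNL_dual_step {nn mm : ℕ} (f g0 : EuclideanSpace ℝ (Fin nn) → ℝ)
    (h : EuclideanSpace ℝ (Fin nn) → EuclideanSpace ℝ (Fin mm)) (ρ ϱ : ℝ)
    (x : EuclideanSpace ℝ (Fin nn)) (μ : EuclideanSpace ℝ (Fin mm)) :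
    LrhoNL f g0 h ρ x (μ - ϱ • h x) = LrhoNL f g0 h ρ x μ - ϱ * ‖h x‖ ^ 2 := by
  simp only [LrhoNL, inner_sub_left, real_inner_smul_left, real_inner_self_eq_norm_sq]
  ring

/-- If `P` decreases by at least `a * t k ^ 2` with `a > 0` and converges, then `t → 0`. -/
lemma tendsto_zero_of_sq_le_decrease {P t : ℕ → ℝ} {a l : ℝ} (ha : 0 < a)
    (hP : Tendsto P atTop (𝓝 l)) (ht : ∀ k, a * t k ^ 2 ≤ P k - P (k + 1)) :
    Tendsto t atTop (𝓝 0) := by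
  have hd : Tendsto (fun k => (P k - P (k + 1)) / a) atTop (𝓝 0) := by
    simpa using (hP.sub (hP.comp (tendsto_add_atTop_nat 1))).div_const a
  have hsq : Tendsto (fun k => t k ^ 2) atTop (𝓝 0) :=
    squeeze_zero (fun k => sq_nonneg _) (fun k => by rw [le_div_iff₀ ha]; linarith [ht k]) hd
  have := hsq.sqrt
  simp only [Real.sqrt_sq_eq_abs, Real.sqrt_zero] at this
  exact (tendsto_zero_iff_abs_tendsto_zero _).2 this

/-- asymptotic convergence of UDD-ALM with nonlinear constraints (Theorem 4.7, part 1). -/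
theorem udd_alm_nonlinear_asymptotic_convergence
    {nn mm L : ℕ}
    (q : Fin L → EuclideanSpace ℝ (Fin nn) → ℝ)
    (hq : ∀ l, ContDiff ℝ 1 (q l))
    (hXne : {u : EuclideanSpace ℝ (Fin nn) | ∀ l, q l u ≤ 0}.Nonempty)
    (hXcomp : IsCompact {u : EuclideanSpace ℝ (Fin nn) | ∀ l, q l u ≤ 0})
    (f g0 : EuclideanSpace ℝ (Fin nn) → ℝ)
    (hg0conv : ConvexOn ℝ Set.univ g0) (hg0cont : Continuous g0)
    (hfC1 : ContDiff ℝ 1 f)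
    (h : EuclideanSpace ℝ (Fin nn) → EuclideanSpace ℝ (Fin mm))
    (hhC1 : ContDiff ℝ 1 h)
    (ρ ϱ c ν : ℝ) (hρ : 0 < ρ) (hϱ : 0 < ϱ) (hc : 0 < c) (hν : 0 < ν)
    (x : ℕ → EuclideanSpace ℝ (Fin nn)) (μ : ℕ → EuclideanSpace ℝ (Fin mm))
    (y : ℕ → Fin L → ℝ) (ζ : ℕ → EuclideanSpace ℝ (Fin nn))
    (hxX : ∀ k, x k ∈ {u : EuclideanSpace ℝ (Fin nn) | ∀ l, q l u ≤ 0})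
    (hy : ∀ k l, 0 ≤ y (k+1) l)
    (hζ : ∀ (k : ℕ), ∀ u : EuclideanSpace ℝ (Fin nn),
      g0 u ≥ g0 (x (k+1)) + ⟪ζ (k+1), u - x (k+1)⟫)
    (hdesc : ∀ k, LrhoNL f g0 h ρ (x (k+1)) (μ k)
      ≤ LrhoNL f g0 h ρ (x k) (μ k) - ν * ‖x (k+1) - x k‖ ^ 2)
    (hstat : ∀ k, (0 : EuclideanSpace ℝ (Fin nn))
      = gradient f (x (k+1)) + ζ (k+1)
        + (ContinuousLinearMap.adjoint (fderiv ℝ h (x (k+1)))) (μ k + ρ • h (x (k+1)))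
        + c • (x (k+1) - x k)
        + ∑ l, y (k+1) l • gradient (q l) (x (k+1)))
    (hcomp : ∀ k l, q l (x (k+1)) ≤ 0 ∧ y (k+1) l * q l (x (k+1)) = 0)
    (hμupd : ∀ k, μ (k+1) = μ k - ϱ • h (x (k+1)))
    (kr : ℕ → ℕ) (hkr : StrictMono kr)
    (xstar : EuclideanSpace ℝ (Fin nn))
    (hxstarX : xstar ∈ {u : EuclideanSpace ℝ (Fin nn) | ∀ l, q l u ≤ 0})
    (hLICQ : LinearIndependent ℝ (Sum.elim
      (fun j : Fin mm =>
        (ContinuousLinearMap.adjoint (fderiv ℝ h xstar)) (EuclideanSpace.single j 1))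
      (fun l : {l : Fin L // q l xstar = 0} => gradient (q (l : Fin L)) xstar)))
    (hconv : Filter.Tendsto (fun r => x (kr r)) Filter.atTop (nhds xstar)) :
    h xstar = 0 ∧
      ∃ (μstar : EuclideanSpace ℝ (Fin mm)) (ystar : Fin L → ℝ)
        (ζstar : EuclideanSpace ℝ (Fin nn)),
        (∀ l, 0 ≤ ystar l)
        ∧ (∀ u : EuclideanSpace ℝ (Fin nn), g0 u ≥ g0 xstar + ⟪ζstar, u - xstar⟫)
        ∧ (0 : EuclideanSpace ℝ (Fin nn))
            = gradient f xstar + ζstar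
              + (ContinuousLinearMap.adjoint (fderiv ℝ h xstar)) μstar
              + ∑ l, ystar l • gradient (q l) xstar
        ∧ (∀ l, q l xstar ≤ 0)
        ∧ (∀ l, ystar l * q l xstar = 0) := by
  classical
  set X := {u : EuclideanSpace ℝ (Fin nn) | ∀ l, q l u ≤ 0} with hX
  set P : ℕ → ℝ := fun k => LrhoNL f g0 h ρ (x k) (μ k) with hPdef
  have hPdec : ∀ k, ν * ‖x (k+1) - x k‖ ^ 2 + ϱ * ‖h (x (k+1))‖ ^ 2 ≤ P k - P (k+1) := by
    intro k
    have h1 : P (k+1) = LrhoNL f g0 h ρ (x (k+1)) (μ k) - ϱ * ‖h (x (k+1))‖ ^ 2 := by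
      rw [hPdef]; dsimp only; rw [hμupd k, LrhoNL_dual_step]
    have h2 := hdesc k
    change _ ≤ P k - _ at h2
    linarith
  have hPanti : Antitone P := antitone_nat_of_succ_le fun k => by
    have := hPdec k
    have h1 : 0 ≤ ν * ‖x (k+1) - x k‖ ^ 2 := by positivity
    have h2 : 0 ≤ ϱ * ‖h (x (k+1))‖ ^ 2 := by positivity
    linarith
  -- Dropping `kr 0`, which may be `0`, makes every index of the form `s r + 1`, where
  -- stationarity is available.
  obtain ⟨s, hs⟩ : ∃ s : ℕ → ℕ, ∀ r, s r + 1 = kr (r + 1) :=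
    ⟨fun r => kr (r + 1) - 1, fun r => by
      have := hkr.id_le (r + 1)
      simp only [id] at this
      exact Nat.sub_add_cancel (by omega)⟩
  have hs_top : Tendsto s atTop atTop := by
    refine tendsto_atTop_mono (fun r => ?_) tendsto_id
    have := hkr.id_le (r + 1)
    have := hs r
    simp only [id] at *
    omega
  have hxs : Tendsto (fun r => x (s r + 1)) atTop (𝓝 xstar) := by
    simp only [hs]
    exact hconv.comp (tendsto_add_atTop_nat 1)
  have hgf := continuous_gradient_of_contDiff hfC1
  obtain ⟨Mf, hMf⟩ := hXcomp.exists_bound_of_continuousOn hfC1.continuous.continuousOn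
  obtain ⟨Mg, hMg⟩ := hXcomp.exists_bound_of_continuousOn hg0cont.continuousOn
  obtain ⟨Mh, hMh⟩ := hXcomp.exists_bound_of_continuousOn hhC1.continuous.continuousOn
  obtain ⟨Md, hMd⟩ := hXcomp.exists_bound_of_continuousOn hgf.continuousOn
  obtain ⟨Mx, hMx⟩ := hXcomp.exists_bound_of_continuousOn
    (continuous_id (X := EuclideanSpace ℝ (Fin nn))).continuousOn
  obtain ⟨Mζ, hMζ⟩ := exists_subgradient_bound hg0cont hXcomp
  have hζb : ∀ k, ‖ζ (k+1)‖ ≤ Mζ := fun k => hMζ _ (hxX _) _ (hζ k)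
  set A : Fin L → Prop := fun l => q l xstar = 0 with hA
  set T := constraintMap q h A with hT
  have hTcont : Continuous T := continuous_constraintMap hq hhC1
  have hinact : ∀ᶠ r in atTop, ∀ l, ¬ A l → y (s r + 1) l = 0 := by
    refine eventually_all.2 fun l => ?_
    by_cases hl : A l
    · exact Eventually.of_forall fun r h' => absurd hl h'
    have hlt : q l xstar < 0 := lt_of_le_of_ne (hxstarX l) hl
    have := ((hq l).continuous.tendsto xstar).comp hxs
    filter_upwards [this.eventually (gt_mem_nhds hlt)] with r hr _
    exact (mul_eq_zero.1 (hcomp (s r) l).2).resolve_right (ne_of_lt hr)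
  set w : ℕ → EuclideanSpace ℝ (Fin mm) × ({l // A l} → ℝ) := fun r =>
    (μ (s r) + ρ • h (x (s r + 1)), fun l => y (s r + 1) l) with hw
  have hstat' : ∀ᶠ r in atTop, gradient f (x (s r + 1)) + ζ (s r + 1) + T (x (s r + 1)) (w r)
      + c • (x (s r + 1) - x (s r)) = 0 := by
    filter_upwards [hinact] with r hr
    have h1 := hstat (s r)
    rw [sum_eq_sum_subtype hr] at h1
    rw [hT, constraintMap_apply, h1]
    simp only [hw]
    abel
  obtain ⟨D, hD⟩ : ∃ D, ∀ᶠ r in atTop, ‖w r‖ ≤ D := by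
    refine eventually_bounded_of_injective_limit (T := fun r => T (x (s r + 1))) (T₀ := T xstar)
      (C := Md + Mζ + c * (Mx + Mx)) ((hTcont.tendsto xstar).comp hxs)
      (constraintMap_injective hLICQ) ?_
    filter_upwards [hstat'] with r hr
    have h1 : T (x (s r + 1)) (w r) = -(gradient f (x (s r + 1)) + ζ (s r + 1)
        + c • (x (s r + 1) - x (s r))) := by
      rw [eq_neg_iff_add_eq_zero, ← hr]; abel
    rw [h1, norm_neg]
    refine (norm_add₃_le).trans ?_
    have h2 : ‖c • (x (s r + 1) - x (s r))‖ ≤ c * (Mx + Mx) := by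
      rw [norm_smul, Real.norm_of_nonneg hc.le]
      gcongr
      exact (norm_sub_le _ _).trans (add_le_add (hMx _ (hxX _)) (hMx _ (hxX _)))
    linarith [hMd _ (hxX (s r + 1)), hζb (s r)]
  -- Bounded multipliers along the subsequence bound the antitone sequence `P` from below.
  have hPbdd : BddBelow (Set.range P) := by
    refine ⟨-Mf - Mg - (D + (ρ + ϱ) * Mh) * Mh, ?_⟩
    rintro _ ⟨k, rfl⟩
    obtain ⟨r, hr, hkr'⟩ := (hD.and (hs_top.eventually_ge_atTop k)).exists
    refine le_trans ?_ (hPanti (show k ≤ s r + 1 by omega))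
    have hμe : μ (s r + 1) = (w r).1 - (ρ + ϱ) • h (x (s r + 1)) := by
      rw [hμupd]; simp only [hw]; module
    have hh := hMh _ (hxX (s r + 1))
    have hμb : ‖μ (s r + 1)‖ ≤ D + (ρ + ϱ) * Mh := by
      rw [hμe]
      refine (norm_sub_le _ _).trans ?_
      rw [norm_smul, Real.norm_of_nonneg (by positivity)]
      gcongr
      exact (norm_fst_le _).trans hr
    have hin : |⟪μ (s r + 1), h (x (s r + 1))⟫| ≤ (D + (ρ + ϱ) * Mh) * Mh :=
      (abs_real_inner_le_norm _ _).trans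
        (mul_le_mul hμb hh (norm_nonneg _) ((norm_nonneg _).trans hμb))
    have hf' := hMf _ (hxX (s r + 1))
    have hg' := hMg _ (hxX (s r + 1))
    rw [Real.norm_eq_abs] at hf' hg'
    have hsq : 0 ≤ ρ / 2 * ‖h (x (s r + 1))‖ ^ 2 := by positivity
    simp only [hPdef, LrhoNL]
    linarith [(abs_le.1 hf').1, (abs_le.1 hg').1, (abs_le.1 hin).1]
  have hPlim := tendsto_atTop_ciInf hPanti hPbdd
  have hdx : Tendsto (fun k => ‖x (k+1) - x k‖) atTop (𝓝 0) :=
    tendsto_zero_of_sq_le_decrease hν hPlim fun k => by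
      have : 0 ≤ ϱ * ‖h (x (k+1))‖ ^ 2 := by positivity
      linarith [hPdec k]
  have hhx : Tendsto (fun k => ‖h (x (k+1))‖) atTop (𝓝 0) :=
    tendsto_zero_of_sq_le_decrease hϱ hPlim fun k => by
      have : 0 ≤ ν * ‖x (k+1) - x k‖ ^ 2 := by positivity
      linarith [hPdec k]
  have hhstar : h xstar = 0 :=
    tendsto_nhds_unique ((hhC1.continuous.tendsto xstar).comp hxs)
      ((tendsto_zero_iff_norm_tendsto_zero.2 hhx).comp hs_top)
  obtain ⟨⟨wstar, ζstar⟩, -, φ, hφ, hlim⟩ := tendsto_subseq_of_frequently_bounded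
    (Metric.isBounded_closedBall (x := (0 : (EuclideanSpace ℝ (Fin mm) × ({l // A l} → ℝ)) ×
      EuclideanSpace ℝ (Fin nn))) (r := max D Mζ)) (x := fun r => (w r, ζ (s r + 1)))
    (Eventually.frequently (by
      filter_upwards [hD] with r hr
      rw [mem_closedBall_zero_iff, Prod.norm_def]
      exact max_le_max hr (hζb _)))
  have hφt := hφ.tendsto_atTop
  have hwlim : Tendsto (fun r => w (φ r)) atTop (𝓝 wstar) :=
    (continuous_fst.tendsto _).comp hlim
  have hζlim : Tendsto (fun r => ζ (s (φ r) + 1)) atTop (𝓝 ζstar) :=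
    (continuous_snd.tendsto _).comp hlim
  have hxlim : Tendsto (fun r => x (s (φ r) + 1)) atTop (𝓝 xstar) := hxs.comp hφt
  have hkkt : gradient f xstar + ζstar + T xstar wstar = 0 := by
    have hTw : Tendsto (fun r => T (x (s (φ r) + 1)) (w (φ r))) atTop (𝓝 (T xstar wstar)) :=
      tendsto_clm_apply ((hTcont.tendsto xstar).comp hxlim) hwlim
    have h1 := ((((hgf.tendsto xstar).comp hxlim).add hζlim).add hTw).add
      (((tendsto_zero_iff_norm_tendsto_zero.2 hdx).comp (hs_top.comp hφt)).const_smul c)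
    rw [smul_zero, add_zero] at h1
    refine tendsto_nhds_unique h1 (tendsto_const_nhds.congr' ?_)
    filter_upwards [hφt.eventually hstat'] with r hr
    exact hr.symm
  have hoff : ∀ l, ¬ A l → (if hl : A l then wstar.2 ⟨l, hl⟩ else 0) = 0 := fun l hl => dif_neg hl
  refine ⟨hhstar, wstar.1, fun l => if hl : A l then wstar.2 ⟨l, hl⟩ else 0, ζstar,
    fun l => ?_, fun u => ?_, ?_, hxstarX, fun l => ?_⟩
  · dsimp only
    split_ifs with hl
    · have h1 : Tendsto (fun r => (w (φ r)).2 ⟨l, hl⟩) atTop (𝓝 (wstar.2 ⟨l, hl⟩)) :=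
        (((continuous_apply _).comp continuous_snd).tendsto wstar).comp hwlim
      exact ge_of_tendsto' h1 fun r => hy _ _
    · exact le_rfl
  · have h1 : Tendsto (fun r => g0 (x (s (φ r) + 1)) + ⟪ζ (s (φ r) + 1), u - x (s (φ r) + 1)⟫)
        atTop (𝓝 (g0 xstar + ⟪ζstar, u - xstar⟫)) :=
      ((hg0cont.tendsto xstar).comp hxlim).add (hζlim.inner (tendsto_const_nhds.sub hxlim))
    exact le_of_tendsto' h1 fun r => hζ _ u
  · rw [sum_eq_sum_subtype hoff, ← hkkt, hT, constraintMap_apply]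
    simp only [Subtype.prop, dite_true, Subtype.coe_eta]
    abel
  · by_cases hl : A l
    · rw [show q l xstar = 0 from hl, mul_zero]
    · exact mul_eq_zero_of_left (hoff l hl) _
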